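/- Let ρ > 0, let ψ : ℝ^d → ℝ be differentiable and ρ-strongly convex, let L ≥ 0, let g : ℝ^d → ℝ be L-Lipschitz, and let λ > 0. Then for every x ∈ ℝ^d, 0 ≤ g(x) − env←_{λ,g}^ψ(x) ≤ λL²/(2ρ), and likewise 0 ≤ g(x) − env→_{λ,g}^ψ(x) ≤ λL²/(2ρ). -/

import Mathlib

open scoped RealInnerProductSpace

/-- The Bregman divergence associated with a differentiable function `ψ`. -/
noncomputable def bregmanDiv {d : ℕ} (ψ : EuclideanSpace ℝ (Fin d) → ℝ)
    (x y : EuclideanSpace ℝ (Fin d)) : ℝ :=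
  ψ x - ψ y - ⟪gradient ψ y, x - y⟫

/-- The left Bregman–Moreau envelope of `g` associated with `ψ`. -/
noncomputable def leftEnv {d : ℕ} (ψ g : EuclideanSpace ℝ (Fin d) → ℝ) (lam : ℝ)
    (x : EuclideanSpace ℝ (Fin d)) : ℝ :=
  ⨅ y : EuclideanSpace ℝ (Fin d), (g y + (1 / lam) * bregmanDiv ψ y x)

/-- The right Bregman–Moreau envelope of `g` associated with `ψ`. -/
noncomputable def rightEnv {d : ℕ} (ψ g : EuclideanSpace ℝ (Fin d) → ℝ) (lam : ℝ)
    (x : EuclideanSpace ℝ (Fin d)) : ℝ :=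
  ⨅ y : EuclideanSpace ℝ (Fin d), (g y + (1 / lam) * bregmanDiv ψ x y)

/-- The elementary estimate behind the envelope bounds: a penalty at least `ρ/2 * r²`, scaled by
`1 / lam`, compensates a decrease of at most `L * r` up to `lam * L² / (2ρ)`. -/
lemma sub_le_add_one_div_mul_of_quadratic_le {ρ lam L a b r D : ℝ} (hρ : 0 < ρ) (hlam : 0 < lam)
    (hab : a - b ≤ L * r) (hD : ρ / 2 * r ^ 2 ≤ D) :
    a - lam * L ^ 2 / (2 * ρ) ≤ b + 1 / lam * D := by
  have hscaled : 1 / lam * (ρ / 2 * r ^ 2) ≤ 1 / lam * D := by gcongr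
  have hsquare : lam * L ^ 2 / (2 * ρ) + 1 / lam * (ρ / 2 * r ^ 2) - L * r
      = (lam * L - ρ * r) ^ 2 / (2 * ρ * lam) := by
    field_simp
    ring
  have hnonneg : 0 ≤ (lam * L - ρ * r) ^ 2 / (2 * ρ * lam) := by positivity
  linarith

/-- An infimum is within `c` below `a` if `a` is a value and `a - c` is a lower bound. -/
lemma sub_iInf_mem_Icc {ι : Type*} {f : ι → ℝ} {a c : ℝ} (i : ι) (hi : f i = a)
    (hf : ∀ j, a - c ≤ f j) : 0 ≤ a - ⨅ j, f j ∧ a - ⨅ j, f j ≤ c := by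
  have : Nonempty ι := ⟨i⟩
  have hbdd : BddBelow (Set.range f) := ⟨a - c, Set.forall_mem_range.2 hf⟩
  have hle := ciInf_le hbdd i
  have hge := le_ciInf hf
  constructor <;> linarith

lemma bregmanDiv_self {d : ℕ} (ψ : EuclideanSpace ℝ (Fin d) → ℝ)
    (x : EuclideanSpace ℝ (Fin d)) : bregmanDiv ψ x x = 0 := by
  simp [bregmanDiv]

/-- If `ψ` is differentiable and `ρ`-strongly convex and `g` is `L`-Lipschitz, then
`0 ≤ g(x) − env←_{λ,g}^ψ(x) ≤ λ L² / (2ρ)`, and likewise for the right envelope. -/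
theorem stmt1 {d : ℕ} (ρ : ℝ) (hρ : 0 < ρ)
    (ψ : EuclideanSpace ℝ (Fin d) → ℝ)
    (hdiff : Differentiable ℝ ψ)
    (hsc : ∀ y ytil : EuclideanSpace ℝ (Fin d),
      ψ ytil + ⟪gradient ψ ytil, y - ytil⟫ + ρ / 2 * ‖y - ytil‖ ^ 2 ≤ ψ y)
    (L : ℝ) (hL : 0 ≤ L)
    (g : EuclideanSpace ℝ (Fin d) → ℝ)
    (hg : ∀ x y, |g x - g y| ≤ L * ‖x - y‖)
    (lam : ℝ) (hlam : 0 < lam) :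
    ∀ x : EuclideanSpace ℝ (Fin d),
      (0 ≤ g x - leftEnv ψ g lam x ∧ g x - leftEnv ψ g lam x ≤ lam * L ^ 2 / (2 * ρ)) ∧
      (0 ≤ g x - rightEnv ψ g lam x ∧ g x - rightEnv ψ g lam x ≤ lam * L ^ 2 / (2 * ρ)) := by
  have hD : ∀ y z, ρ / 2 * ‖y - z‖ ^ 2 ≤ bregmanDiv ψ y z := fun y z => by
    have := hsc y z
    unfold bregmanDiv
    linarith
  intro x
  have hgx : ∀ y, g x - g y ≤ L * ‖x - y‖ := fun y => (le_abs_self _).trans (hg x y)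
  constructor
  · refine sub_iInf_mem_Icc x (by simp [bregmanDiv_self]) fun y => ?_
    exact sub_le_add_one_div_mul_of_quadratic_le hρ hlam (hgx y) (norm_sub_rev x y ▸ hD y x)
  · refine sub_iInf_mem_Icc x (by simp [bregmanDiv_self]) fun y => ?_
    exact sub_le_add_one_div_mul_of_quadratic_le hρ hlam (hgx y) (hD x y)
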